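/- arXiv:2112.04458 — 5 statements merged into one kernel-verified Lean document; each statement's English description precedes it below -/
import Mathlib

section
/- Let G be a group and suppose that for all f, g ∈ G the subgroup ⟨f, g⟩ generated by f and g is 2-boundedly acyclic. Then G is 2-boundedly acyclic. -/
/-- A bounded 2-cocycle on `G` with trivial real coefficients. -/
def IsBounded2Cocycle {G : Type*} [Group G] (ω : G → G → ℝ) : Prop :=
  (∃ C : ℝ, ∀ g h : G, |ω g h| ≤ C) ∧
    ∀ g₁ g₂ g₃ : G, ω g₂ g₃ - ω (g₁ * g₂) g₃ + ω g₁ (g₂ * g₃) - ω g₁ g₂ = 0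

/-- `ω` is the coboundary of a bounded real-valued function. -/
def IsCoboundaryOfBounded {G : Type*} [Group G] (ω : G → G → ℝ) : Prop :=
  ∃ φ : G → ℝ, (∃ C : ℝ, ∀ g : G, |φ g| ≤ C) ∧
    ∀ g h : G, ω g h = φ h - φ (g * h) + φ g

/-- A group is 2-boundedly acyclic if `H²_b(G; ℝ) = 0`, i.e. every bounded 2-cocycle is
the coboundary of a bounded function. -/
def Is2BoundedlyAcyclic (G : Type*) [Group G] : Prop :=
  ∀ ω : G → G → ℝ, IsBounded2Cocycle ω → IsCoboundaryOfBounded ω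

/-- A 2-cocycle is homogeneous if it vanishes on powers of a single element. -/
def IsHomogeneous {G : Type*} [Group G] (ω : G → G → ℝ) : Prop :=
  ∀ (g : G) (i j : ℤ), ω (g ^ i) (g ^ j) = 0

theorem doubling_bound (a : ℕ → ℝ) (B C : ℝ) (hB : ∀ k, |a k| ≤ B)
    (hC : ∀ k, |2 * a k - a (k + 1)| ≤ C) : |a 0| ≤ C := by
  by_contra! hlt
  have key : ∀ k : ℕ, C + 2 ^ k * (|a 0| - C) ≤ |a k| := by
    intro k
    induction k with
    | zero => simp
    | succ k ih =>
      have h1 := abs_sub_abs_le_abs_sub (2 * a k) (a (k + 1))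
      rw [abs_mul, abs_two] at h1
      have h2 := hC k
      rw [pow_succ]
      linarith
  have hpos : 0 < |a 0| - C := by linarith
  obtain ⟨n, hn⟩ := pow_unbounded_of_one_lt ((B - C) / (|a 0| - C)) (one_lt_two (α := ℝ))
  rw [div_lt_iff₀ hpos] at hn
  linarith [key n, hB n]

/-- `v` is the value at `x` of a bounded primitive of `ω` along the elements `x ^ (2 ^ k)`. -/
def SolAt {G : Type*} [Group G] (ω : G → G → ℝ) (x : G) (v : ℝ) : Prop :=
  ∃ a : ℕ → ℝ, (∃ B, ∀ k, |a k| ≤ B) ∧ a 0 = v ∧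
    ∀ k, 2 * a k - a (k + 1) = ω (x ^ (2 ^ k)) (x ^ (2 ^ k))

theorem SolAt.bound {G : Type*} [Group G] {ω : G → G → ℝ} {x : G} {v C : ℝ}
    (h : SolAt ω x v) (hC : ∀ g h, |ω g h| ≤ C) : |v| ≤ C := by
  obtain ⟨a, ⟨B, hB⟩, rfl, ha⟩ := h
  exact doubling_bound a B C hB fun k => by rw [ha]; exact hC _ _

theorem SolAt.unique {G : Type*} [Group G] {ω : G → G → ℝ} {x : G} {v w : ℝ}
    (h : SolAt ω x v) (h' : SolAt ω x w) : v = w := by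
  obtain ⟨a, ⟨B, hB⟩, rfl, ha⟩ := h
  obtain ⟨b, ⟨B', hB'⟩, rfl, hb⟩ := h'
  have := doubling_bound (fun k => a k - b k) (B + B') 0
    (fun k => (abs_sub _ _).trans (add_le_add (hB k) (hB' k)))
    (fun k => by
      have e : 2 * (a k - b k) - (a (k + 1) - b (k + 1)) = 0 := by linarith [ha k, hb k]
      simp [e])
  exact sub_eq_zero.1 (abs_nonpos_iff.1 this)

theorem solAt_of_subgroup {G : Type*} [Group G] {ω : G → G → ℝ} {K : Subgroup G}
    {φ : K → ℝ} (hb : ∃ C : ℝ, ∀ g, |φ g| ≤ C)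
    (hφ : ∀ g h : K, ω g h = φ h - φ (g * h) + φ g) (x : K) : SolAt ω (x : G) (φ x) := by
  obtain ⟨B, hB⟩ := hb
  refine ⟨fun k => φ (x ^ (2 ^ k)), ⟨B, fun k => hB _⟩, by simp, fun k => ?_⟩
  have := hφ (x ^ (2 ^ k)) (x ^ (2 ^ k))
  rw [← pow_add, ← two_mul, ← pow_succ'] at this
  push_cast at this
  rw [this]
  ring

/-- If every 2-generated subgroup of `G` is 2-boundedly acyclic, then
so is `G`. -/
theorem two_generated_acyclic_implies_acyclic {G : Type*} [Group G]
    (h : ∀ f g : G, Is2BoundedlyAcyclic ↥(Subgroup.closure {f, g})) :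
    Is2BoundedlyAcyclic G := by
  rintro ω ⟨⟨C, hC⟩, hω⟩
  have hex : ∀ f g : G, ∃ φ : Subgroup.closure {f, g} → ℝ, (∃ C : ℝ, ∀ g, |φ g| ≤ C) ∧
      ∀ a b : Subgroup.closure {f, g}, ω a b = φ b - φ (a * b) + φ a := fun f g =>
    h f g (fun a b => ω a b) ⟨⟨C, fun a b => hC _ _⟩, fun a b c => hω a b c⟩
  have hsol : ∀ x : G, ∃ v, SolAt ω x v := fun x => by
    obtain ⟨φ, hb, hφ⟩ := hex x x
    exact ⟨_, solAt_of_subgroup hb hφ ⟨x, Subgroup.subset_closure (by simp)⟩⟩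
  choose ψ hψ using hsol
  refine ⟨ψ, ⟨C, fun g => (hψ g).bound hC⟩, fun f g => ?_⟩
  obtain ⟨φ, hb, hφ⟩ := hex f g
  have hv : ∀ x : Subgroup.closure {f, g}, ψ x = φ x := fun x =>
    (hψ x).unique (solAt_of_subgroup hb hφ x)
  have e := hφ ⟨f, Subgroup.subset_closure (by simp)⟩ ⟨g, Subgroup.subset_closure (by simp)⟩
  rw [← hv, ← hv, ← hv] at e
  exact e
end

section
/- Let G be a group that is the union of a directed family of subgroups {G_i} (directed: any two members of the family are both contained in a third member), each of which is 2-boundedly acyclic. Then G is 2-boundedly acyclic. -/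
/-- A bounded function with `2φ(g) - φ(g²)` bounded by `C` is itself bounded by `C`. -/
theorem bounded_by_defect {H : Type*} [Group H] (φ : H → ℝ) (B C : ℝ)
    (hB : ∀ g, |φ g| ≤ B) (hC : ∀ g, |φ g - φ (g * g) + φ g| ≤ C) (g : H) : |φ g| ≤ C := by
  have hbdd : BddAbove (Set.range fun g => |φ g|) := ⟨B, by rintro _ ⟨g, rfl⟩; exact hB g⟩
  have hle : ∀ g, |φ g| ≤ ⨆ g, |φ g| := fun g => le_ciSup hbdd g
  have hS : (⨆ g, |φ g|) ≤ (C + ⨆ g, |φ g|) / 2 := by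
    haveI : Nonempty H := ⟨1⟩
    apply ciSup_le
    intro x
    have h1 := abs_le.1 (hC x)
    have h2 := abs_le.1 (hle (x * x))
    rw [abs_le]
    constructor <;> linarith [h1.1, h1.2, h2.1, h2.2]
  linarith [hle g]

/-- Bounded primitives are unique. -/
theorem bounded_primitive_unique {H : Type*} [Group H] (φ ψ : H → ℝ)
    (hφ : ∃ C : ℝ, ∀ g, |φ g| ≤ C) (hψ : ∃ C : ℝ, ∀ g, |ψ g| ≤ C)
    (h : ∀ g k : H, φ k - φ (g * k) + φ g = ψ k - ψ (g * k) + ψ g) (g : H) : φ g = ψ g := by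
  obtain ⟨A, hA⟩ := hφ
  obtain ⟨B, hB⟩ := hψ
  have := bounded_by_defect (fun x => φ x - ψ x) (A + B) 0
    (fun x => (abs_sub _ _).trans (add_le_add (hA x) (hB x)))
    (fun x => by
      rw [abs_nonpos_iff]
      linarith [h x x]) g
  rw [abs_nonpos_iff] at this
  linarith

/-- A directed union of 2-boundedly acyclic groups is 2-boundedly
acyclic. -/
theorem directed_union_of_acyclic_is_acyclic {G : Type*} [Group G]
    {ι : Type*} (Gi : ι → Subgroup G)
    (hdir : ∀ i j : ι, ∃ k : ι, Gi i ≤ Gi k ∧ Gi j ≤ Gi k)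
    (hunion : ∀ g : G, ∃ i : ι, g ∈ Gi i)
    (hac : ∀ i : ι, Is2BoundedlyAcyclic ↥(Gi i)) :
    Is2BoundedlyAcyclic G := by
  rintro ω ⟨⟨C, hC⟩, hω⟩
  have hprim : ∀ i, IsCoboundaryOfBounded (fun g h : Gi i => ω g h) := fun i =>
    hac i _ ⟨⟨C, fun g h => hC g h⟩, fun a b c => hω a b c⟩
  choose φ hφb hφ using hprim
  have hle : ∀ i k (hik : Gi i ≤ Gi k) (g : G) (hg : g ∈ Gi i),
      φ i ⟨g, hg⟩ = φ k ⟨g, hik hg⟩ := by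
    intro i k hik g hg
    obtain ⟨B, hB⟩ := hφb k
    exact bounded_primitive_unique (φ i) (fun x => φ k ⟨x, hik x.2⟩) (hφb i)
      ⟨B, fun x => hB _⟩
      (fun x y => (hφ i x y).symm.trans (hφ k ⟨x, hik x.2⟩ ⟨y, hik y.2⟩)) ⟨g, hg⟩
  choose n hn using hunion
  have hglue : ∀ i (g : G) (hg : g ∈ Gi i), φ (n g) ⟨g, hn g⟩ = φ i ⟨g, hg⟩ := by
    intro i g hg
    obtain ⟨k, h1, h2⟩ := hdir (n g) i
    rw [hle _ k h1, hle _ k h2]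
  refine ⟨fun g => φ (n g) ⟨g, hn g⟩, ⟨C, fun g => ?_⟩, fun g h => ?_⟩
  · obtain ⟨B, hB⟩ := hφb (n g)
    exact bounded_by_defect (φ (n g)) B C hB
      (fun x => by rw [← hφ (n g) x x]; exact hC x x) _
  · obtain ⟨k, h1, h2⟩ := hdir (n g) (n h)
    have hg := h1 (hn g)
    have hh := h2 (hn h)
    simp only [hglue k g hg, hglue k h hh, hglue k (g * h) (mul_mem hg hh)]
    exact hφ k ⟨g, hg⟩ ⟨h, hh⟩
end

section
/- Every second bounded cohomology class admits a unique homogeneous representative: for every group G and every bounded 2-cocycle ω on G, there exists a unique homogeneous bounded 2-cocycle ω' on G such that ω − ω' is the coboundary of a bounded function φ : G → ℝ. -/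
lemma eq_zero_of_pow_bound (x C : ℝ) (h : ∀ n : ℕ, 2 ^ n * |x| ≤ C) : x = 0 := by
  by_contra hx
  have hx' : 0 < |x| := abs_pos.mpr hx
  obtain ⟨n, hn⟩ := pow_unbounded_of_one_lt (C / |x|) (by norm_num : (1 : ℝ) < 2)
  have := h n
  rw [div_lt_iff₀ hx'] at hn
  linarith

lemma exists_int_primitive (f : ℤ → ℝ) :
    ∃ ψ : ℤ → ℝ, ψ 0 = 0 ∧ ∀ n, ψ (n + 1) = ψ n + f n := by
  refine ⟨fun n => ∑ k ∈ Finset.range n.toNat, f k -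
    ∑ k ∈ Finset.range (-n).toNat, f (-(k : ℤ) - 1), by simp, ?_⟩
  intro n
  rcases le_or_gt 0 n with hn | hn
  · obtain ⟨m, rfl⟩ := Int.eq_ofNat_of_zero_le hn
    have h1 : ((m : ℤ) + 1).toNat = m + 1 := by omega
    have h2 : (-((m : ℤ) + 1)).toNat = 0 := by omega
    have h3 : (-(m : ℤ)).toNat = 0 := by omega
    have h4 : (m : ℤ).toNat = m := by omega
    simp only [h1, h2, h3, h4, Finset.sum_range_succ, Finset.sum_range_zero]
    ring
  · obtain ⟨m, hm⟩ : ∃ m : ℕ, n = -(m : ℤ) - 1 := ⟨(-n - 1).toNat, by omega⟩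
    subst hm
    have h1 : (-(m : ℤ) - 1 + 1).toNat = 0 := by omega
    have h2 : (-(-(m : ℤ) - 1 + 1)).toNat = m := by omega
    have h3 : (-(m : ℤ) - 1).toNat = 0 := by omega
    have h4 : (-(-(m : ℤ) - 1)).toNat = m + 1 := by omega
    simp only [h1, h2, h3, h4, Finset.sum_range_succ, Finset.sum_range_zero]
    ring

lemma int_cocycle_zero (a : ℤ → ℤ → ℝ) (C : ℝ) (hC : ∀ i j, |a i j| ≤ C)
    (hc : ∀ i j k, a j k - a (i + j) k + a i (j + k) - a i j = 0)
    (hd : ∀ i, a i i = 0) (i j : ℤ) : a i j = 0 := by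
  obtain ⟨ψ, h0, hs⟩ := exists_int_primitive (fun n => - a n 1)
  have ha : ∀ i j, a i j = ψ j - ψ (i + j) + ψ i := by
    intro i j
    have step : ∀ j, a i (j + 1) - (ψ (j + 1) - ψ (i + (j + 1)) + ψ i)
        = a i j - (ψ j - ψ (i + j) + ψ i) := by
      intro j
      have := hc i j 1
      rw [← add_assoc, hs j, hs (i + j)]
      linarith
    have key : ∀ j, a i j - (ψ j - ψ (i + j) + ψ i) = 0 := by
      intro j
      induction j using Int.induction_on with
      | zero =>
        have := hc i 0 0
        have := hd 0
        simp only [add_zero] at *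
        linarith
      | succ k ih => rw [step]; exact ih
      | pred k ih =>
        have := step (-(k : ℤ) - 1)
        rw [sub_add_cancel] at this
        rw [← this]; exact ih
    linarith [key j]
  have hdbl : ∀ i, ψ (2 * i) = 2 * ψ i := by
    intro i
    have := ha i i
    rw [hd, ← two_mul] at this
    linarith
  have hpow : ∀ (n : ℕ) i, ψ (2 ^ n * i) = 2 ^ n * ψ i := by
    intro n
    induction n with
    | zero => intro i; simp
    | succ n ih => intro i; rw [pow_succ, mul_assoc, ih, hdbl]; ring
  apply eq_zero_of_pow_bound _ C
  intro n
  have h1 := ha (2 ^ n * i) (2 ^ n * j)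
  rw [← mul_add, hpow, hpow, hpow] at h1
  have h2 : a (2 ^ n * i) (2 ^ n * j) = 2 ^ n * a i j := by rw [h1, ha i j]; ring
  have h3 := hC (2 ^ n * i) (2 ^ n * j)
  rwa [h2, abs_mul, abs_of_pos (by positivity : (0 : ℝ) < 2 ^ n)] at h3

lemma exists_doubling {G : Type*} [Group G] (ω : G → G → ℝ) (C : ℝ)
    (hC : ∀ g h, |ω g h| ≤ C) :
    ∃ φ : G → ℝ, (∀ g, |φ g| ≤ C) ∧ ∀ g, ω g g = 2 * φ g - φ (g * g) := by
  let t : G → ℕ → ℝ := fun g k => ω (g ^ 2 ^ k) (g ^ 2 ^ k) * (1 / 2 / 2 ^ k)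
  have hb : HasSum (fun k : ℕ => C * (1 / 2 / 2 ^ k : ℝ)) C := by
    simpa using (hasSum_geometric_two' (1 : ℝ)).mul_left C
  have ht : ∀ g k, ‖t g k‖ ≤ C * (1 / 2 / 2 ^ k : ℝ) := by
    intro g k
    simp only [t]
    rw [Real.norm_eq_abs, abs_mul, abs_of_pos (by positivity : (0 : ℝ) < 1 / 2 / 2 ^ k)]
    exact mul_le_mul_of_nonneg_right (hC _ _) (by positivity)
  have hs : ∀ g, Summable (t g) := fun g => Summable.of_norm_bounded hb.summable (ht g)
  refine ⟨fun g => ∑' k, t g k, fun g => tsum_of_norm_bounded hb (ht g), fun g => ?_⟩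
  have h1 : ∑' k, t g k = t g 0 + ∑' k, t g (k + 1) := (hs g).tsum_eq_zero_add
  have h2 : ∀ k, t (g * g) k = 2 * t g (k + 1) := by
    intro k
    have : (g * g) ^ 2 ^ k = g ^ 2 ^ (k + 1) := by
      rw [← pow_two, ← pow_mul, pow_succ' 2 k]
    simp only [t, this, pow_succ (2 : ℝ) k]
    field_simp
  have h3 : ∑' k, t (g * g) k = 2 * ∑' k, t g (k + 1) := by
    simp_rw [h2]; exact tsum_mul_left
  have h4 : t g 0 = ω g g / 2 := by simp [t]; ring
  show ω g g = 2 * ∑' k, t g k - ∑' k, t (g * g) k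
  rw [h3, h1, h4]; ring

/-- **Bouarich.** Every second bounded cohomology class admits a unique
homogeneous representative. -/
theorem unique_homogeneous_representative {G : Type*} [Group G]
    (ω : G → G → ℝ) (hb : IsBounded2Cocycle ω) :
    ∃! ω' : G → G → ℝ, IsBounded2Cocycle ω' ∧ IsHomogeneous ω' ∧
      ∃ φ : G → ℝ, (∃ C : ℝ, ∀ g : G, |φ g| ≤ C) ∧
        ∀ g h : G, ω g h - ω' g h = φ h - φ (g * h) + φ g := by
  obtain ⟨⟨C, hC⟩, hc⟩ := hb
  obtain ⟨φ, hφ, hdb⟩ := exists_doubling ω C hC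
  have hbd : ∀ g h, |ω g h - (φ h - φ (g * h) + φ g)| ≤ C + (C + C + C) := by
    intro g h
    have h1 := abs_le.mp (hC g h)
    have h2 := abs_le.mp (hφ g)
    have h3 := abs_le.mp (hφ h)
    have h4 := abs_le.mp (hφ (g * h))
    rw [abs_le]
    constructor <;> linarith
  have hco : ∀ g₁ g₂ g₃, (ω g₂ g₃ - (φ g₃ - φ (g₂ * g₃) + φ g₂))
      - (ω (g₁ * g₂) g₃ - (φ g₃ - φ (g₁ * g₂ * g₃) + φ (g₁ * g₂)))
      + (ω g₁ (g₂ * g₃) - (φ (g₂ * g₃) - φ (g₁ * (g₂ * g₃)) + φ g₁))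
      - (ω g₁ g₂ - (φ g₂ - φ (g₁ * g₂) + φ g₁)) = 0 := by
    intro g₁ g₂ g₃
    have := hc g₁ g₂ g₃
    rw [mul_assoc g₁ g₂ g₃]
    linarith
  refine ⟨fun g h => ω g h - (φ h - φ (g * h) + φ g),
    ⟨⟨⟨_, hbd⟩, hco⟩, ?_, φ, ⟨C, hφ⟩, fun g h => by ring⟩, ?_⟩
  · intro g i j
    refine int_cocycle_zero (fun i j => ω (g ^ i) (g ^ j) -
      (φ (g ^ j) - φ (g ^ i * g ^ j) + φ (g ^ i))) _ (fun i j => hbd _ _) ?_ ?_ i j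
    · intro i j k
      have := hco (g ^ i) (g ^ j) (g ^ k)
      simpa only [zpow_add] using this
    · intro i
      have := hdb (g ^ i)
      show ω (g ^ i) (g ^ i) - _ = 0
      linarith
  · rintro ω' ⟨-, hhom, φ', ⟨C', hC'⟩, heq⟩
    have hdb' : ∀ g, ω g g = 2 * φ' g - φ' (g * g) := by
      intro g
      have h1 := heq g g
      have h2 := hhom g 1 1
      rw [zpow_one] at h2
      linarith
    have hpow : ∀ (n : ℕ) g, φ (g ^ 2 ^ n) - φ' (g ^ 2 ^ n) = 2 ^ n * (φ g - φ' g) := by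
      intro n
      induction n with
      | zero => intro g; simp
      | succ n ih =>
        intro g
        have h1 := hdb (g ^ 2 ^ n)
        have h2 := hdb' (g ^ 2 ^ n)
        have h3 : g ^ 2 ^ (n + 1) = g ^ 2 ^ n * g ^ 2 ^ n := by
          rw [pow_succ, pow_mul, pow_two]
        have h4 := ih g
        rw [h3, pow_succ (2 : ℝ)]
        linarith
    have hz : ∀ g, φ g = φ' g := by
      intro g
      refine sub_eq_zero.mp (eq_zero_of_pow_bound _ (C + C') fun n => ?_)
      rw [← abs_of_pos (by positivity : (0 : ℝ) < 2 ^ n), ← abs_mul, ← hpow]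
      exact (abs_sub _ _).trans (add_le_add (hφ _) (hC' _))
    funext g h
    have := heq g h
    rw [← hz, ← hz, ← hz] at this
    linarith
end

section
/- Every subgroup G of PL⁺([0,1]), the group of orientation-preserving piecewise linear homeomorphisms of the interval [0,1], is 2-boundedly acyclic. -/
/-- Membership in `PL⁺([0,1])`, the group of orientation-preserving piecewise linear
homeomorphisms of `[0,1]`, realised as order-automorphisms of `ℝ` that are the identity
outside `[0,1]` and affine on each piece of a finite partition of `[0,1]`. -/
def InPL01 (f : ℝ ≃o ℝ) : Prop :=
  (∀ x : ℝ, x ∉ Set.Icc (0 : ℝ) 1 → f x = x) ∧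
    ∃ (m : ℕ) (x : Fin (m + 1) → ℝ), x 0 = 0 ∧ x (Fin.last m) = 1 ∧ StrictMono x ∧
      ∀ i : Fin m, ∃ c d : ℝ,
        ∀ t ∈ Set.Icc (x i.castSucc) (x i.succ), f t = c * t + d

namespace PLAcyc

universe u

open Filter Topology
open scoped commutatorElement

theorem eq_zero_of_bdd {r C : ℝ} (h : ∀ n : ℕ, |(n : ℝ) * r| ≤ C) : r = 0 := by
  by_contra hr
  obtain ⟨n, hn⟩ := exists_nat_gt (C / |r|)
  have h1 := h n
  have hp : 0 < |r| := abs_pos.mpr hr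
  rw [abs_mul, Nat.abs_cast] at h1
  rw [div_lt_iff₀ hp] at hn
  linarith

/-- Homogeneous quasimorphisms. -/
structure HQM {E : Type*} [Group E] (φ : E → ℝ) (D : ℝ) : Prop where
  quasi : ∀ x y, |φ (x * y) - φ x - φ y| ≤ D
  hpow : ∀ x (n : ℕ), φ (x ^ n) = n * φ x

namespace HQM
variable {E : Type*} [Group E] {φ : E → ℝ} {D : ℝ}

theorem one (h : HQM φ D) : φ 1 = 0 := by
  have := h.hpow 1 0
  simpa using this

theorem conj (h : HQM φ D) (g x : E) : φ (g * x * g⁻¹) = φ x := by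
  have key : ∀ n : ℕ, |(n : ℝ) * (φ (g * x * g⁻¹) - φ x)| ≤ 2 * D + |φ g| + |φ g⁻¹| := by
    intro n
    have e1 : (n : ℝ) * (φ (g * x * g⁻¹) - φ x) = φ (g * x ^ n * g⁻¹) - φ (x ^ n) := by
      rw [← conj_pow, h.hpow, h.hpow]; ring
    rw [e1]
    have h1 := h.quasi (g * x ^ n) g⁻¹
    have h2 := h.quasi g (x ^ n)
    have h3 := abs_le.mp h1
    have h4 := abs_le.mp h2
    have := neg_abs_le (φ g)
    have := le_abs_self (φ g)
    have := neg_abs_le (φ g⁻¹)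
    have := le_abs_self (φ g⁻¹)
    rw [abs_le]; constructor <;> linarith
  have := eq_zero_of_bdd key
  linarith

theorem inv (h : HQM φ D) (x : E) : φ x⁻¹ = - φ x := by
  have key : ∀ n : ℕ, |(n : ℝ) * (φ x⁻¹ + φ x)| ≤ D := by
    intro n
    have h1 := h.quasi (x ^ n) (x⁻¹ ^ n)
    have : x ^ n * x⁻¹ ^ n = 1 := by simp
    rw [this, h.one, h.hpow, h.hpow] at h1
    rw [abs_le] at *
    constructor <;> linarith
  have := eq_zero_of_bdd key
  linarith

theorem comm_add (h : HQM φ D) {x y : E} (hc : Commute x y) : φ (x * y) = φ x + φ y := by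
  have key : ∀ n : ℕ, |(n : ℝ) * (φ (x * y) - φ x - φ y)| ≤ D := by
    intro n
    have h1 := h.quasi (x ^ n) (y ^ n)
    rw [← hc.mul_pow, h.hpow, h.hpow, h.hpow] at h1
    convert h1 using 2; ring
  have := eq_zero_of_bdd key
  linarith

theorem comm_bdd (h : HQM φ D) (x y : E) : |φ ⁅x, y⁆| ≤ D := by
  have h1 := h.quasi x (y * x⁻¹ * y⁻¹)
  rw [h.conj, h.inv] at h1
  have : ⁅x, y⁆ = x * (y * x⁻¹ * y⁻¹) := by rw [commutatorElement_def]; group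
  rw [this]
  simpa using h1

end HQM

/-- `φ` is additive on the subgroup `M`. -/
def HomOn {E : Type*} [Group E] (φ : E → ℝ) (M : Subgroup E) : Prop :=
  ∀ a ∈ M, ∀ b ∈ M, φ (a * b) = φ a + φ b

section
variable {E : Type*} [Group E] {φ : E → ℝ} {D : ℝ}

theorem comm_zero (h : HQM φ D) {M : Subgroup E} [hM : M.Normal] (hm : HomOn φ M) {u v : E}
    (huv : ⁅u, v⁆ ∈ M) : φ ⁅u, v⁆ = 0 := by
  have key : ∀ n : ℕ, ⁅u ^ n, v⁆ ∈ M ∧ φ ⁅u ^ n, v⁆ = n * φ ⁅u, v⁆ := by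
    intro n
    induction n with
    | zero => simp [h.one, M.one_mem]
    | succ n ih =>
      have e : ⁅u ^ (n + 1), v⁆ = (u * ⁅u ^ n, v⁆ * u⁻¹) * ⁅u, v⁆ := by
        simp only [commutatorElement_def, pow_succ']; group
      have h1 := hM.conj_mem _ ih.1 u
      rw [e]
      refine ⟨M.mul_mem h1 huv, ?_⟩
      rw [hm _ h1 _ huv, h.conj, ih.2]; push_cast; ring
  apply eq_zero_of_bdd (C := D)
  intro n
  rw [← (key n).2]
  exact h.comm_bdd _ _

/-- The kernel of `φ` on `M`. -/
def kerOn (h : HQM φ D) (M : Subgroup E) (hm : HomOn φ M) : Subgroup E where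
  carrier := {x | x ∈ M ∧ φ x = 0}
  one_mem' := ⟨M.one_mem, h.one⟩
  mul_mem' := by
    rintro a b ⟨ha, ha'⟩ ⟨hb, hb'⟩
    exact ⟨M.mul_mem ha hb, by rw [hm a ha b hb, ha', hb', add_zero]⟩
  inv_mem' := by
    rintro a ⟨ha, ha'⟩
    exact ⟨M.inv_mem ha, by rw [h.inv, ha', neg_zero]⟩

theorem kerOn_normal (h : HQM φ D) (M : Subgroup E) [hM : M.Normal] (hm : HomOn φ M) :
    (kerOn h M hm).Normal := by
  constructor
  rintro n ⟨h1, h2⟩ g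
  exact ⟨hM.conj_mem n h1 g, by rw [h.conj, h2]⟩

theorem add_ker (h : HQM φ D) (N : Subgroup E) [hN : N.Normal] (h0 : ∀ x ∈ N, φ x = 0)
    (g n : E) (hn : n ∈ N) : φ (g * n) = φ g := by
  have key : ∀ k : ℕ, |(k : ℝ) * (φ (g * n) - φ g)| ≤ D := by
    intro k
    have h1 : (g ^ k)⁻¹ * (g * n) ^ k ∈ N := by
      rw [← QuotientGroup.eq]
      have : ((g * n : E) : E ⧸ N) = (g : E ⧸ N) := by
        rw [eq_comm, QuotientGroup.eq]; simpa using hn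
      rw [QuotientGroup.mk_pow, QuotientGroup.mk_pow, this]
    have h2 := h.quasi (g ^ k) ((g ^ k)⁻¹ * (g * n) ^ k)
    rw [h0 _ h1, mul_inv_cancel_left, h.hpow, h.hpow] at h2
    convert h2 using 2; ring
  have := eq_zero_of_bdd key
  linarith

theorem exists_quot {E : Type u} [Group E] {φ : E → ℝ} {D : ℝ} (h : HQM φ D) (M : Subgroup E) [hM : M.Normal] (hm : HomOn φ M) :
    ∃ (Q : Type u) (_ : Group Q) (π : E →* Q) (ψ : Q → ℝ), HQM ψ D ∧ (∀ x, ψ (π x) = φ x) ∧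
      ∀ u v, ⁅u, v⁆ ∈ M → Commute (π u) (π v) := by
  have hN := kerOn_normal h M hm
  set N := kerOn h M hm with hNdef
  have h0 : ∀ x ∈ N, φ x = 0 := fun x hx => hx.2
  let ψ : E ⧸ N → ℝ := Quotient.lift φ (by
    intro a b hab
    have hab : a⁻¹ * b ∈ N := QuotientGroup.leftRel_apply.mp hab
    have := add_ker h N h0 a _ hab
    rw [mul_inv_cancel_left] at this
    exact this.symm)
  have hψ : ∀ x : E, ψ (QuotientGroup.mk' N x) = φ x := fun x => rfl
  refine ⟨E ⧸ N, inferInstance, QuotientGroup.mk' N, ψ, ⟨?_, ?_⟩, hψ, ?_⟩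
  · intro x y
    obtain ⟨x, rfl⟩ := QuotientGroup.mk'_surjective N x
    obtain ⟨y, rfl⟩ := QuotientGroup.mk'_surjective N y
    rw [← map_mul, hψ, hψ, hψ]; exact h.quasi x y
  · intro x n
    obtain ⟨x, rfl⟩ := QuotientGroup.mk'_surjective N x
    rw [← map_pow, hψ, hψ]; exact h.hpow x n
  · intro u v huv
    have : ⁅u, v⁆ ∈ N := ⟨huv, comm_zero h hm huv⟩
    rw [← QuotientGroup.ker_mk' N, MonoidHom.mem_ker, map_commutatorElement,
      commutatorElement_eq_one_iff_commute] at this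
    exact this

theorem hom_of_comm (h : HQM φ D) (hm : HomOn φ (commutator E)) (x y : E) :
    φ (x * y) = φ x + φ y := by
  obtain ⟨Q, _, π, ψ, h1, h2, h3⟩ := exists_quot h (commutator E) hm
  have := h1.comm_add (h3 x y (Subgroup.commutator_mem_commutator (Subgroup.mem_top _) (Subgroup.mem_top _)))
  rwa [← map_mul, h2, h2, h2] at this

/-- Product of conjugates of `x` by powers of `t`. -/
def W (t x : E) : ℕ → E
  | 0 => 1
  | n + 1 => x * (t * W t x n * t⁻¹)

theorem W_comm {t a b : E} (hc : ∀ i : ℕ, 1 ≤ i → Commute (t ^ i * a * (t ^ i)⁻¹) b) (n : ℕ) :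
    ∀ i : ℕ, 1 ≤ i → Commute (t ^ i * W t a n * (t ^ i)⁻¹) b := by
  induction n with
  | zero => intro i _; simp [W]
  | succ n ih =>
    intro i hi
    have : t ^ i * W t a (n + 1) * (t ^ i)⁻¹ =
        (t ^ i * a * (t ^ i)⁻¹) * (t ^ (i + 1) * W t a n * (t ^ (i + 1))⁻¹) := by
      simp only [W, pow_succ]; group
    rw [this]
    exact (hc i hi).mul_left (ih (i + 1) (by omega))

theorem W_phi (h : HQM φ D) {t a : E}
    (hc : ∀ i : ℕ, 1 ≤ i → Commute (t ^ i * a * (t ^ i)⁻¹) a) (n : ℕ) :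
    φ (W t a n) = n * φ a := by
  induction n with
  | zero => simp [W, h.one]
  | succ n ih =>
    have h1 := W_comm hc n 1 le_rfl
    rw [pow_one] at h1
    rw [W, h.comm_add h1.symm, h.conj, ih]; push_cast; ring

theorem W_mul {t a b : E} (hc : ∀ i : ℕ, 1 ≤ i → Commute (t ^ i * a * (t ^ i)⁻¹) b) (n : ℕ) :
    W t (a * b) n = W t a n * W t b n := by
  induction n with
  | zero => simp [W]
  | succ n ih =>
    have h1 := (W_comm hc n 1 le_rfl).eq
    rw [pow_one] at h1
    have e : W t a (n + 1) * W t b (n + 1) =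
      a * ((t * W t a n * t⁻¹) * b) * (t * W t b n * t⁻¹) := by simp only [W]; group
    rw [e, h1, W, ih]; group

theorem disp (h : HQM φ D) {t x y : E}
    (hxx : ∀ i : ℕ, 1 ≤ i → Commute (t ^ i * x * (t ^ i)⁻¹) x)
    (hxy : ∀ i : ℕ, 1 ≤ i → Commute (t ^ i * x * (t ^ i)⁻¹) y)
    (hyx : ∀ i : ℕ, 1 ≤ i → Commute (t ^ i * y * (t ^ i)⁻¹) x)
    (hyy : ∀ i : ℕ, 1 ≤ i → Commute (t ^ i * y * (t ^ i)⁻¹) y) :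
    φ (x * y) = φ x + φ y := by
  have hz : ∀ i : ℕ, 1 ≤ i → Commute (t ^ i * (x * y) * (t ^ i)⁻¹) (x * y) := by
    intro i hi
    have : t ^ i * (x * y) * (t ^ i)⁻¹ = (t ^ i * x * (t ^ i)⁻¹) * (t ^ i * y * (t ^ i)⁻¹) := by
      group
    rw [this]
    exact ((hxx i hi).mul_right (hxy i hi)).mul_left ((hyx i hi).mul_right (hyy i hi))
  have key : ∀ n : ℕ, |(n : ℝ) * (φ (x * y) - φ x - φ y)| ≤ D := by
    intro n
    have h1 := h.quasi (W t x n) (W t y n)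
    rw [← W_mul hxy, W_phi h hz, W_phi h hxx, W_phi h hyy] at h1
    convert h1 using 2; ring
  have := eq_zero_of_bdd key
  linarith

theorem step (h : HQM φ D) (M L : Subgroup E) [hM : M.Normal] (hm : HomOn φ M)
    (hd : ∀ x ∈ L, ∀ y ∈ L, ∃ t : E, ∀ i : ℕ, 1 ≤ i → ∀ a b, (a = x ∨ a = y) → (b = x ∨ b = y) →
      ⁅t ^ i * a * (t ^ i)⁻¹, b⁆ ∈ M) : HomOn φ L := by
  intro x hx y hy
  obtain ⟨t, ht⟩ := hd x hx y hy
  obtain ⟨Q, _, π, ψ, h1, h2, h3⟩ := exists_quot h M hm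
  have hc : ∀ i : ℕ, 1 ≤ i → ∀ a b, (a = x ∨ a = y) → (b = x ∨ b = y) →
      Commute ((π t) ^ i * (π a) * ((π t) ^ i)⁻¹) (π b) := by
    intro i hi a b ha hb
    have := h3 _ _ (ht i hi a b ha hb)
    simpa using this
  have := disp h1 (t := π t) (x := π x) (y := π y)
    (fun i hi => hc i hi x x (.inl rfl) (.inl rfl)) (fun i hi => hc i hi x y (.inl rfl) (.inr rfl))
    (fun i hi => hc i hi y x (.inr rfl) (.inl rfl)) (fun i hi => hc i hi y y (.inr rfl) (.inr rfl))
  rwa [← map_mul, h2, h2, h2] at this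

end

/-! Dynamics -/

/-- Locally affine on each side of every point. -/
def LocAff (f : ℝ ≃o ℝ) : Prop :=
  ∀ s : ℝ, (∃ c d : ℝ, ∀ᶠ t in 𝓝[≥] s, f t = c * t + d) ∧
    (∃ c d : ℝ, ∀ᶠ t in 𝓝[≤] s, f t = c * t + d)

theorem isClosed_fix (f : ℝ ≃o ℝ) : IsClosed {t | f t = t} :=
  isClosed_eq f.continuous continuous_id

theorem locAff_of_PL {f : ℝ ≃o ℝ} (hf : InPL01 f) : LocAff f := by
  obtain ⟨h0, m, x, hx0, hx1, hmono, hx⟩ := hf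
  have hge : ∀ t, 1 ≤ t → f t = t := by
    have : closure (Set.Ioi (1:ℝ)) ⊆ {t | f t = t} := by
      apply closure_minimal _ (isClosed_fix f)
      intro t ht
      exact h0 t (fun h => absurd h.2 (not_le.mpr ht))
    rw [closure_Ioi] at this
    exact fun t ht => this ht
  have hle : ∀ t, t ≤ 0 → f t = t := by
    have : closure (Set.Iio (0:ℝ)) ⊆ {t | f t = t} := by
      apply closure_minimal _ (isClosed_fix f)
      intro t ht
      exact h0 t (fun h => absurd h.1 (not_le.mpr ht))
    rw [closure_Iio] at this
    exact fun t ht => this ht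
  intro s
  constructor
  · rcases lt_or_ge s 0 with hs | hs
    · refine ⟨1, 0, ?_⟩
      filter_upwards [mem_nhdsWithin_of_mem_nhds (Iio_mem_nhds hs)] with t ht
      rw [hle t (le_of_lt ht)]; ring
    rcases lt_or_ge s 1 with hs1 | hs1
    · have : ∃ i : Fin m, x i.castSucc ≤ s ∧ s < x i.succ := by
        by_contra hcon
        push Not at hcon
        have : ∀ j : Fin (m + 1), x j ≤ s := by
          intro j
          induction j using Fin.induction with
          | zero => rw [hx0]; exact hs
          | succ i ih => exact hcon i ih
        have := this (Fin.last m)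
        linarith
      obtain ⟨i, hi1, hi2⟩ := this
      obtain ⟨c, d, hcd⟩ := hx i
      refine ⟨c, d, ?_⟩
      filter_upwards [mem_nhdsWithin_of_mem_nhds (Iio_mem_nhds hi2), self_mem_nhdsWithin] with t ht ht'
      exact hcd t ⟨le_trans hi1 ht', le_of_lt ht⟩
    · refine ⟨1, 0, ?_⟩
      filter_upwards [self_mem_nhdsWithin] with t ht
      rw [hge t (le_trans hs1 ht)]; ring
  · rcases lt_or_ge 1 s with hs | hs
    · refine ⟨1, 0, ?_⟩
      filter_upwards [mem_nhdsWithin_of_mem_nhds (Ioi_mem_nhds hs)] with t ht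
      rw [hge t (le_of_lt ht)]; ring
    rcases lt_or_ge 0 s with hs1 | hs1
    · have : ∃ i : Fin m, x i.castSucc < s ∧ s ≤ x i.succ := by
        by_contra hcon
        push Not at hcon
        have : ∀ j : Fin (m + 1), x j < s := by
          intro j
          induction j using Fin.induction with
          | zero => rw [hx0]; exact hs1
          | succ i ih => exact hcon i ih
        have := this (Fin.last m)
        linarith
      obtain ⟨i, hi1, hi2⟩ := this
      obtain ⟨c, d, hcd⟩ := hx i
      refine ⟨c, d, ?_⟩
      filter_upwards [mem_nhdsWithin_of_mem_nhds (Ioi_mem_nhds hi1), self_mem_nhdsWithin] with t ht ht'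
      exact hcd t ⟨le_of_lt ht, le_trans ht' hi2⟩
    · refine ⟨1, 0, ?_⟩
      filter_upwards [self_mem_nhdsWithin] with t ht
      rw [hle t (le_trans ht hs1)]; ring

theorem germ_comm {f g : ℝ ≃o ℝ} (hf : LocAff f) (hg : LocAff g) {s : ℝ} (hfs : f s = s)
    (hgs : g s = s) : ∀ᶠ t in 𝓝 s, f (g t) = g (f t) := by
  have tend : ∀ k : ℝ ≃o ℝ, k s = s → Tendsto k (𝓝 s) (𝓝 s) := by
    intro k hk
    have := k.continuous.tendsto s
    rwa [hk] at this
  have tR : ∀ k : ℝ ≃o ℝ, k s = s → Tendsto k (𝓝[≥] s) (𝓝[≥] s) := by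
    intro k hk
    apply tendsto_nhdsWithin_iff.mpr
    refine ⟨(tend k hk).mono_left nhdsWithin_le_nhds, ?_⟩
    filter_upwards [self_mem_nhdsWithin] with t ht
    have := k.monotone (show s ≤ t from ht)
    rwa [hk] at this
  have tL : ∀ k : ℝ ≃o ℝ, k s = s → Tendsto k (𝓝[≤] s) (𝓝[≤] s) := by
    intro k hk
    apply tendsto_nhdsWithin_iff.mpr
    refine ⟨(tend k hk).mono_left nhdsWithin_le_nhds, ?_⟩
    filter_upwards [self_mem_nhdsWithin] with t ht
    have := k.monotone (show t ≤ s from ht)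
    rwa [hk] at this
  have alg : ∀ F : Filter ℝ, (∀ k : ℝ ≃o ℝ, k s = s → Tendsto k F F) →
      (∃ c d : ℝ, (∀ᶠ t in F, f t = c * t + d) ∧ f s = c * s + d) →
      (∃ c d : ℝ, (∀ᶠ t in F, g t = c * t + d) ∧ g s = c * s + d) →
      ∀ᶠ t in F, f (g t) = g (f t) := by
    rintro F hF ⟨c, d, h1, h1s⟩ ⟨c', d', h2, h2s⟩
    filter_upwards [h1, h2, (hF g hgs).eventually h1, (hF f hfs).eventually h2] with t e1 e2 e3 e4
    rw [e3, e4, e1, e2]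
    have hd : d = s - c * s := by linarith
    have hd' : d' = s - c' * s := by linarith
    rw [hd, hd']; ring
  rw [← nhdsLE_sup_nhdsGE, eventually_sup]
  constructor
  · apply alg _ tL
    · obtain ⟨c, d, h⟩ := (hf s).2
      exact ⟨c, d, h, h.self_of_nhdsWithin Set.self_mem_Iic⟩
    · obtain ⟨c, d, h⟩ := (hg s).2
      exact ⟨c, d, h, h.self_of_nhdsWithin Set.self_mem_Iic⟩
  · apply alg _ tR
    · obtain ⟨c, d, h⟩ := (hf s).1
      exact ⟨c, d, h, h.self_of_nhdsWithin Set.self_mem_Ici⟩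
    · obtain ⟨c, d, h⟩ := (hg s).1
      exact ⟨c, d, h, h.self_of_nhdsWithin Set.self_mem_Ici⟩

theorem fix_inv {f : ℝ ≃o ℝ} {t : ℝ} (h : f t = t) : f⁻¹ t = t := by
  have : f.symm t = t := by rw [OrderIso.symm_apply_eq, h]
  exact this

theorem inv_app (f : ℝ ≃o ℝ) (t : ℝ) : f (f⁻¹ t) = t := f.apply_symm_apply t
theorem app_inv (f : ℝ ≃o ℝ) (t : ℝ) : f⁻¹ (f t) = t := f.symm_apply_apply t
theorem mul_app (f g : ℝ ≃o ℝ) (t : ℝ) : (f * g) t = f (g t) := rfl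
theorem one_app (t : ℝ) : (1 : ℝ ≃o ℝ) t = t := rfl

section
variable {E : Type*} [Group E] (ρ : E →* (ℝ ≃o ℝ))

/-- Subgroup of elements fixing a neighbourhood of `s`. -/
def flatSub (s : ℝ) : Subgroup E where
  carrier := {e | ∀ᶠ t in 𝓝 s, ρ e t = t}
  one_mem' := by simp [one_app]
  mul_mem' := by
    intro a b ha hb
    filter_upwards [ha, hb] with t h1 h2
    rw [map_mul, mul_app, h2, h1]
  inv_mem' := by
    intro a ha
    filter_upwards [ha] with t h1
    rw [map_inv, fix_inv h1]

/-- Subgroup of elements fixing `[p, ∞)`. -/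
def raySub (p : ℝ) : Subgroup E where
  carrier := {e | ∀ t, p ≤ t → ρ e t = t}
  one_mem' := by simp [one_app]
  mul_mem' := by
    intro a b ha hb t ht
    rw [map_mul, mul_app, hb t ht, ha t ht]
  inv_mem' := by
    intro a ha t ht
    rw [map_inv, fix_inv (ha t ht)]

/-- Global fixed points. -/
def GFix : Set ℝ := {p | ∀ e, ρ e p = p}

theorem isClosed_GFix : IsClosed (GFix ρ) := by
  have : GFix ρ = ⋂ e, {p | ρ e p = p} := by ext; simp [GFix]
  rw [this]
  exact isClosed_iInter fun e => isClosed_fix _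

variable {ρ}

theorem flat_of_comm (hρ : ∀ e, LocAff (ρ e)) {s : ℝ} (hs : s ∈ GFix ρ) :
    commutator E ≤ flatSub ρ s := by
  rw [commutator_def, Subgroup.commutator_le]
  intro g _ h _
  have h1 := germ_comm (hρ g) (hρ h) (hs g) (hs h)
  have ht : Tendsto (fun t => (ρ g)⁻¹ ((ρ h)⁻¹ t)) (𝓝 s) (𝓝 s) := by
    have hc : Continuous (fun t => (ρ g)⁻¹ ((ρ h)⁻¹ t)) :=
      (OrderIso.continuous _).comp (OrderIso.continuous _)
    have := hc.tendsto s
    simp only [fix_inv (hs h), fix_inv (hs g)] at this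
    exact this
  filter_upwards [ht.eventually h1] with t h2
  rw [commutatorElement_def, map_mul, map_mul, map_mul, map_inv, map_inv, mul_app, mul_app, mul_app,
    h2, inv_app, inv_app]

theorem ray_normal {p : ℝ} (hp : p ∈ GFix ρ) : (raySub ρ p).Normal := by
  constructor
  intro n hn g t ht
  rw [map_mul, map_mul, map_inv, mul_app, mul_app]
  have : p ≤ (ρ g)⁻¹ t := by
    have := (ρ g)⁻¹.monotone ht
    rwa [fix_inv (hp g)] at this
  rw [hn _ this, inv_app]

/-- commutator elements fixing `[p, ∞)`. -/
def Lsub (ρ : E →* (ℝ ≃o ℝ)) (p : ℝ) : Subgroup E := commutator E ⊓ raySub ρ p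

theorem L_normal {p : ℝ} (hp : p ∈ GFix ρ) : (Lsub ρ p).Normal := by
  have := ray_normal hp
  unfold Lsub
  infer_instance

theorem exists_disp {s s' c d : ℝ} (hs' : s' ∈ GFix ρ) (hsc : s < c) (hcs : c < s') (hds : d < s')
    (hno : ∀ p ∈ GFix ρ, s < p → s' ≤ p) : ∃ t, d < ρ t c := by
  by_contra hcon
  push Not at hcon
  set O := Set.range (fun e => ρ e c) with hO
  have hb : BddAbove O := ⟨d, by rintro _ ⟨e, rfl⟩; exact hcon e⟩
  have hne : O.Nonempty := ⟨_, ⟨1, rfl⟩⟩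
  have hle : ∀ g, sSup O ≤ ρ g (sSup O) := by
    intro g
    apply csSup_le hne
    rintro _ ⟨e, rfl⟩
    have h1 : ρ (g⁻¹ * e) c ≤ sSup O := le_csSup hb ⟨_, rfl⟩
    have h2 := (ρ g).monotone h1
    rwa [map_mul, map_inv, mul_app, inv_app] at h2
  have hfix : sSup O ∈ GFix ρ := by
    intro g
    apply le_antisymm _ (hle g)
    have h1 := (ρ g).monotone (hle g⁻¹)
    rwa [map_inv, inv_app] at h1
  have h1 : c ≤ sSup O := le_csSup hb ⟨1, by simp [one_app]⟩
  have h2 := hno _ hfix (by linarith)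
  have h3 : sSup O ≤ d := csSup_le hne (by rintro _ ⟨e, rfl⟩; exact hcon e)
  linarith

theorem gap_step {φ : E → ℝ} {D : ℝ} (h : HQM φ D) (hρ : ∀ e, LocAff (ρ e)) {s s' : ℝ}
    (hs : s ∈ GFix ρ) (hs' : s' ∈ GFix ρ) (hss : s < s')
    (hno : ∀ p ∈ GFix ρ, s < p → s' ≤ p) (hm : HomOn φ (Lsub ρ s)) : HomOn φ (Lsub ρ s') := by
  have := L_normal hs
  apply step h (Lsub ρ s) _ hm
  intro x hx y hy
  have f1 := (flat_of_comm hρ hs hx.1 : ∀ᶠ t in 𝓝 s, ρ x t = t).and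
    (flat_of_comm hρ hs hy.1 : ∀ᶠ t in 𝓝 s, ρ y t = t)
  have f2 := (flat_of_comm hρ hs' hx.1 : ∀ᶠ t in 𝓝 s', ρ x t = t).and
    (flat_of_comm hρ hs' hy.1 : ∀ᶠ t in 𝓝 s', ρ y t = t)
  obtain ⟨ε, hε, h1⟩ := Metric.eventually_nhds_iff.mp f1
  obtain ⟨δ, hδ, h2⟩ := Metric.eventually_nhds_iff.mp f2
  set r := min (min (ε / 2) (δ / 2)) ((s' - s) / 3) with hr
  have hr0 : 0 < r := by
    apply lt_min (lt_min _ _) _ <;> linarith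
  have hrε : r ≤ ε / 2 := le_trans (min_le_left _ _) (min_le_left _ _)
  have hrδ : r ≤ δ / 2 := le_trans (min_le_left _ _) (min_le_right _ _)
  have hrs : r ≤ (s' - s) / 3 := min_le_right _ _
  set c := s + r with hc
  set d := s' - r with hd
  have hcd : c < d := by linarith
  have lo : ∀ z, s ≤ z → z ≤ c → ρ x z = z ∧ ρ y z = z := by
    intro z hz1 hz2
    apply h1
    rw [Real.dist_eq, abs_lt]; constructor <;> linarith
  have hi : ∀ z, d ≤ z → ρ x z = z ∧ ρ y z = z := by
    intro z hz
    rcases le_or_gt s' z with h' | h'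
    · exact ⟨hx.2 z h', hy.2 z h'⟩
    · apply h2
      rw [Real.dist_eq, abs_lt]; constructor <;> linarith
  obtain ⟨t, ht⟩ := exists_disp hs' (show s < c by linarith) (show c < s' by linarith)
    (show d < s' by linarith) hno
  refine ⟨t, ?_⟩
  intro i hi1 a b ha hb
  have ti : d < ρ (t ^ i) c := by
    induction i, hi1 using Nat.le_induction with
    | base => simpa using ht
    | succ n hn ih =>
      rw [pow_succ, map_mul, mul_app]
      exact lt_trans ih ((ρ (t ^ n)).strictMono (lt_trans hcd ht))
  have alo : ∀ z, s ≤ z → z ≤ c → ρ a z = z := by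
    intro z k1 k2; rcases ha with rfl | rfl
    · exact (lo z k1 k2).1
    · exact (lo z k1 k2).2
  have bhi : ∀ z, d ≤ z → ρ b z = z := by
    intro z k1; rcases hb with rfl | rfl
    · exact (hi z k1).1
    · exact (hi z k1).2
  refine ⟨Subgroup.commutator_mem_commutator (Subgroup.mem_top _) (Subgroup.mem_top _), ?_⟩
  set A := t ^ i * a * (t ^ i)⁻¹ with hA
  have Afix : ∀ z, s ≤ z → z ≤ d → ρ A z = z := by
    intro z hz1 hz2
    rw [hA, map_mul, map_mul, map_inv, mul_app, mul_app, alo, inv_app]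
    · have := (ρ (t ^ i))⁻¹.monotone hz1
      rwa [fix_inv (hs (t ^ i))] at this
    · have := (ρ (t ^ i))⁻¹.monotone (le_trans hz2 ti.le)
      rwa [app_inv] at this
  have comm : ∀ z, s ≤ z → ρ A (ρ b z) = ρ b (ρ A z) := by
    intro z hz
    rcases le_total z d with hzd | hzd
    · rw [Afix z hz hzd, Afix]
      · have := (ρ b).monotone hz
        rwa [hs b] at this
      · have := (ρ b).monotone hzd
        rwa [bhi d le_rfl] at this
    · rw [bhi z hzd, bhi]
      have := (ρ A).monotone hzd
      rwa [Afix d (by linarith) le_rfl] at this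
  intro z hz
  have hw : s ≤ (ρ A)⁻¹ ((ρ b)⁻¹ z) := by
    have h1 := (ρ b)⁻¹.monotone hz
    rw [fix_inv (hs b)] at h1
    have h2 := (ρ A)⁻¹.monotone h1
    rwa [fix_inv (hs A)] at h2
  rw [commutatorElement_def, map_mul, map_mul, map_mul, map_inv, map_inv, mul_app, mul_app, mul_app,
    comm _ hw, inv_app, inv_app]

theorem main_dyn {φ : E → ℝ} {D : ℝ} (h : HQM φ D) (hρ : ∀ e, LocAff (ρ e))
    (hout : ∀ e, ∀ x : ℝ, x ∉ Set.Icc (0 : ℝ) 1 → ρ e x = x)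
    (hker : HomOn φ ρ.ker)
    (GP : ∀ s ∈ GFix ρ, (∀ ε > 0, ∃ p ∈ GFix ρ, s < p ∧ p < s + ε) →
      ∃ ε > 0, ∀ e, ∀ t, s ≤ t → t ≤ s + ε → ρ e t = t) (x y : E) : φ (x * y) = φ x + φ y := by
  apply hom_of_comm h
  set S : Set ℝ := {p | p ∈ GFix ρ ∧ p ≤ 2 ∧ HomOn φ (Lsub ρ p)} with hS
  have F2 : (2 : ℝ) ∈ GFix ρ := fun e => hout e 2 (by norm_num)
  have hne : (-1 : ℝ) ∈ S := by
    refine ⟨fun e => hout e _ (by norm_num), by norm_num, ?_⟩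
    have hk : Lsub ρ (-1) ≤ ρ.ker := by
      intro e he
      rw [MonoidHom.mem_ker]
      ext t
      rw [one_app]
      rcases le_or_gt (-1) t with h1 | h1
      · exact he.2 t h1
      · exact hout e t (fun h => by linarith [h.1])
    exact fun a ha b hb => hker a (hk ha) b (hk hb)
  have hbd : BddAbove S := ⟨2, fun p hp => hp.2.1⟩
  set s := sSup S with hs
  have hs2 : s ≤ 2 := csSup_le ⟨_, hne⟩ fun p hp => hp.2.1
  have hsF : s ∈ GFix ρ := by
    have h1 : s ∈ closure S := csSup_mem_closure ⟨_, hne⟩ hbd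
    exact closure_minimal (fun p hp => hp.1) (isClosed_GFix ρ) h1
  have hsS : HomOn φ (Lsub ρ s) := by
    intro a ha b hb
    have f1 := (flat_of_comm hρ hsF ha.1 : ∀ᶠ t in 𝓝 s, ρ a t = t).and
      (flat_of_comm hρ hsF hb.1 : ∀ᶠ t in 𝓝 s, ρ b t = t)
    obtain ⟨ε, hε, h1⟩ := Metric.eventually_nhds_iff.mp f1
    obtain ⟨p, hp, hp1⟩ := exists_lt_of_lt_csSup ⟨_, hne⟩ (show s - ε < sSup S by linarith)
    have near : ∀ t, p ≤ t → t < s → ρ a t = t ∧ ρ b t = t := by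
      intro t h2 h3
      apply h1
      rw [Real.dist_eq, abs_lt]; constructor <;> linarith
    refine hp.2.2 a ⟨ha.1, ?_⟩ b ⟨hb.1, ?_⟩
    · intro t ht
      rcases lt_or_ge t s with h3 | h3
      · exact (near t ht h3).1
      · exact ha.2 t h3
    · intro t ht
      rcases lt_or_ge t s with h3 | h3
      · exact (near t ht h3).2
      · exact hb.2 t h3
  rcases hs2.eq_or_lt with h2 | h2
  · have hle : commutator E ≤ Lsub ρ s := by
      intro e he
      refine ⟨he, fun t ht => hout e t fun h => ?_⟩
      have := h.2
      linarith
    exact fun a ha b hb => hsS a (hle ha) b (hle hb)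
  exfalso
  have up : ∀ p, p ∈ GFix ρ → p ≤ 2 → HomOn φ (Lsub ρ p) → p ≤ s :=
    fun p h1 h2 h3 => le_csSup hbd ⟨h1, h2, h3⟩
  by_cases hacc : ∀ ε > 0, ∃ p ∈ GFix ρ, s < p ∧ p < s + ε
  · obtain ⟨ε, hε, h3⟩ := GP s hsF hacc
    have hp1 : min (s + ε) 2 ≤ s + ε := min_le_left _ _
    have hp2 : s < min (s + ε) 2 := lt_min (by linarith) h2
    have := up (min (s + ε) 2) (fun e => h3 e _ hp2.le hp1) (min_le_right _ _) (by
      have hle : Lsub ρ (min (s + ε) 2) ≤ Lsub ρ s := by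
        intro e he
        refine ⟨he.1, fun t ht => ?_⟩
        rcases le_or_gt t (min (s + ε) 2) with h4 | h4
        · exact h3 e t ht (le_trans h4 hp1)
        · exact he.2 t h4.le
      exact fun a ha b hb => hsS a (hle ha) b (hle hb))
    linarith
  · push Not at hacc
    obtain ⟨ε, hε, h3⟩ := hacc
    set T := GFix ρ ∩ Set.Ici (s + ε) with hT
    have hT' : ∀ p ∈ GFix ρ, s < p → p ∈ T := fun p hp hsp => ⟨hp, h3 p hp hsp⟩
    have hTc : IsClosed T := (isClosed_GFix ρ).inter isClosed_Ici
    have hTb : BddBelow T := ⟨s + ε, fun p hp => hp.2⟩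
    have h2T : (2 : ℝ) ∈ T := hT' 2 F2 h2
    have hm : sInf T ∈ T := hTc.csInf_mem ⟨_, h2T⟩ hTb
    have h4 : s + ε ≤ sInf T := hm.2
    have := up (sInf T) hm.1 (csInf_le hTb h2T)
      (gap_step h hρ hsF hm.1 (by linarith) (fun p hp hsp => csInf_le hTb (hT' p hp hsp)) hsS)
    linarith

theorem main_hom {φ : E → ℝ} {D : ℝ} (h : HQM φ D) (hρ : ∀ e, LocAff (ρ e))
    (hout : ∀ e, ∀ x : ℝ, x ∉ Set.Icc (0 : ℝ) 1 → ρ e x = x)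
    (hker : HomOn φ ρ.ker) (x y : E) : φ (x * y) = φ x + φ y := by
  set H := Subgroup.closure ({x, y} : Set E) with hH
  have hx : x ∈ H := Subgroup.subset_closure (by simp)
  have hy : y ∈ H := Subgroup.subset_closure (by simp)
  refine main_dyn (E := H) (ρ := ρ.comp H.subtype) (φ := fun e => φ e) (D := D)
    ⟨fun a b => h.quasi a b, fun a n => h.hpow a n⟩ (fun e => hρ e) (fun e => hout e)
    (fun a ha b hb => hker a ha b hb) ?_ ⟨x, hx⟩ ⟨y, hy⟩
  intro s hs hacc
  have one : ∀ e ∈ H, ∃ ε > 0, ∀ t, s ≤ t → t ≤ s + ε → ρ e t = t := by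
    intro e he
    obtain ⟨c, d, hcd⟩ := (hρ e s).1
    obtain ⟨u, hu, hcd⟩ := (mem_nhdsGE_iff_exists_Icc_subset).mp hcd
    obtain ⟨p, hp, hp1, hp2⟩ := hacc (u - s) (sub_pos.mpr hu)
    have e1 : ρ e s = c * s + d := hcd ⟨le_rfl, le_of_lt hu⟩
    have e2 : ρ e p = c * p + d := hcd ⟨hp1.le, by linarith⟩
    have e3 : ρ e s = s := hs ⟨e, he⟩
    have e4 : ρ e p = p := hp ⟨e, he⟩
    have hc : c = 1 := by
      have : (c - 1) * (p - s) = 0 := by linarith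
      rcases mul_eq_zero.mp this with h | h <;> linarith
    subst hc
    refine ⟨u - s, sub_pos.mpr hu, fun t h1 h2 => ?_⟩
    have e5 : ρ e t = 1 * t + d := hcd ⟨h1, by linarith⟩
    linarith
  obtain ⟨ε, hε, h1⟩ := one x hx
  obtain ⟨δ, hδ, h2⟩ := one y hy
  refine ⟨min ε δ, lt_min hε hδ, ?_⟩
  rintro ⟨e, he⟩ t ht1 ht2
  have ht3 : t ≤ s + ε := ht2.trans (by linarith [min_le_left ε δ])
  have ht4 : t ≤ s + δ := ht2.trans (by linarith [min_le_right ε δ])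
  show ρ e t = t
  induction he using Subgroup.closure_induction with
  | mem z hz =>
    rcases hz with rfl | hz
    · exact h1 t ht1 ht3
    · rw [Set.mem_singleton_iff] at hz
      subst hz
      exact h2 t ht1 ht4
  | one => simp [one_app]
  | mul a b _ _ ha hb => rw [map_mul, mul_app, hb, ha]
  | inv a _ ha => rw [map_inv, fix_inv ha]

end

/-! Homogenization -/

theorem homogenize {E : Type*} [Group E] (q : E → ℝ) (C : ℝ)
    (hq : ∀ x y, |q (x * y) - q x - q y| ≤ C) :
    ∃ φ : E → ℝ, HQM φ (4 * C) ∧ ∀ x, |φ x - q x| ≤ C := by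
  have hC : 0 ≤ C := le_trans (abs_nonneg _) (hq 1 1)
  have b0 : ∀ x (n : ℕ), |q (x ^ (n + 1)) - (n + 1) * q x| ≤ n * C := by
    intro x n
    induction n with
    | zero => simp
    | succ n ih =>
      have h1 := abs_le.mp (hq (x ^ (n + 1)) x)
      have h2 := abs_le.mp ih
      rw [← pow_succ] at h1
      rw [abs_le]; push_cast; constructor <;> nlinarith
  have b1 : ∀ x (n : ℕ), 1 ≤ n → |q (x ^ n) / n - q x| ≤ C := by
    intro x n hn
    obtain ⟨m, rfl⟩ : ∃ m, n = m + 1 := ⟨n - 1, by omega⟩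
    have h1 := abs_le.mp (b0 x m)
    have hp : (0 : ℝ) < ((m + 1 : ℕ) : ℝ) := by positivity
    have e : q (x ^ (m + 1)) / ((m + 1 : ℕ) : ℝ) - q x
        = (q (x ^ (m + 1)) - (m + 1) * q x) / ((m + 1 : ℕ) : ℝ) := by
      field_simp; push_cast; ring
    rw [e, abs_div, abs_of_pos hp, div_le_iff₀ hp]
    refine (b0 x m).trans ?_
    push_cast; nlinarith
  have conv : ∀ x, ∃ l, Tendsto (fun n : ℕ => q (x ^ n) / n) atTop (𝓝 l) := by
    intro x
    have hsub : Subadditive (fun n : ℕ => q (x ^ n) + C) := by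
      intro m n
      have h1 := abs_le.mp (hq (x ^ m) (x ^ n))
      rw [← pow_add] at h1
      show q (x ^ (m + n)) + C ≤ (q (x ^ m) + C) + (q (x ^ n) + C)
      linarith
    have hbd : BddBelow (Set.range fun n : ℕ => (q (x ^ n) + C) / n) := by
      refine ⟨min 0 (q x - C), ?_⟩
      rintro _ ⟨n, rfl⟩
      rcases Nat.eq_zero_or_pos n with rfl | hn
      · simp
      · have h1 := abs_le.mp (b1 x n hn)
        have h2 : 0 ≤ C / n := by positivity
        apply (min_le_right _ _).trans
        show q x - C ≤ (q (x ^ n) + C) / n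
        rw [add_div]; linarith
    have h1 := hsub.tendsto_lim hbd
    refine ⟨_, (h1.sub (tendsto_const_div_atTop_nhds_zero_nat C)).congr ?_⟩
    intro n
    ring
  choose φ hφ using conv
  have near : ∀ x, |φ x - q x| ≤ C := by
    intro x
    have h1 : Tendsto (fun n : ℕ => |q (x ^ n) / n - q x|) atTop (𝓝 |φ x - q x|) :=
      ((hφ x).sub_const _).abs
    refine le_of_tendsto h1 ?_
    filter_upwards [eventually_ge_atTop 1] with n hn
    exact b1 x n hn
  refine ⟨φ, ⟨?_, ?_⟩, near⟩
  · intro x y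
    have h1 := abs_le.mp (near x)
    have h2 := abs_le.mp (near y)
    have h3 := abs_le.mp (near (x * y))
    have h4 := abs_le.mp (hq x y)
    rw [abs_le]; constructor <;> linarith
  · intro x k
    rcases Nat.eq_zero_or_pos k with rfl | hk
    · have h1 := hφ 1
      simp only [one_pow] at h1
      have := tendsto_nhds_unique h1 (tendsto_const_div_atTop_nhds_zero_nat (q 1))
      simp [this]
    · have h1 : Tendsto (fun n : ℕ => q (x ^ (k * n)) / ((k * n : ℕ) : ℝ)) atTop (𝓝 (φ x)) :=
        (hφ x).comp (tendsto_id.const_mul_atTop' hk)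
      have h2 := h1.const_mul (k : ℝ)
      refine tendsto_nhds_unique (hφ (x ^ k)) (h2.congr ?_)
      intro n
      have : (k : ℝ) ≠ 0 := by positivity
      rw [pow_mul]
      push_cast
      field_simp

/-! Central extension -/

/-- Underlying type of the central extension attached to a cocycle. -/
structure Ext (G : Type*) [Group G] (ω : G → G → ℝ) where
  a : ℝ
  g : G

section
variable {G : Type*} [Group G] {ω : G → G → ℝ}

theorem Ext.ext' {x y : Ext G ω} (h1 : x.a = y.a) (h2 : x.g = y.g) : x = y := by
  cases x; cases y; simp_all

/-- Group structure on the extension. -/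
@[reducible] def extGroup
    (hω : ∀ g₁ g₂ g₃ : G, ω g₂ g₃ - ω (g₁ * g₂) g₃ + ω g₁ (g₂ * g₃) - ω g₁ g₂ = 0) :
    Group (Ext G ω) :=
  letI : Mul (Ext G ω) := ⟨fun x y => ⟨x.a + y.a + ω x.g y.g, x.g * y.g⟩⟩
  letI : One (Ext G ω) := ⟨⟨- ω 1 1, 1⟩⟩
  letI : Inv (Ext G ω) := ⟨fun x => ⟨- x.a - ω x.g⁻¹ x.g - ω 1 1, x.g⁻¹⟩⟩
  Group.ofLeftAxioms
    (by
      intro x y z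
      apply Ext.ext'
      · show x.a + y.a + ω x.g y.g + z.a + ω (x.g * y.g) z.g =
          x.a + (y.a + z.a + ω y.g z.g) + ω x.g (y.g * z.g)
        have := hω x.g y.g z.g
        linarith
      · exact mul_assoc _ _ _)
    (by
      intro x
      apply Ext.ext'
      · show - ω 1 1 + x.a + ω 1 x.g = x.a
        have := hω 1 1 x.g
        simp only [one_mul] at this
        linarith
      · exact one_mul _)
    (by
      intro x
      apply Ext.ext'
      · show - x.a - ω x.g⁻¹ x.g - ω 1 1 + x.a + ω x.g⁻¹ x.g = - ω 1 1
        ring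
      · exact inv_mul_cancel _)

theorem acyclic_of {G : Type*} [Group G] (ρ : G →* (ℝ ≃o ℝ)) (hinj : Function.Injective ρ)
    (hρ : ∀ e, LocAff (ρ e))
    (hout : ∀ e, ∀ x : ℝ, x ∉ Set.Icc (0 : ℝ) 1 → ρ e x = x) : Is2BoundedlyAcyclic G := by
  rintro ω ⟨⟨C, hC⟩, hω⟩
  letI := extGroup hω
  have mul_a : ∀ x y : Ext G ω, (x * y).a = x.a + y.a + ω x.g y.g := fun _ _ => rfl
  have mul_g : ∀ x y : Ext G ω, (x * y).g = x.g * y.g := fun _ _ => rfl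
  let π : Ext G ω →* G := MonoidHom.mk' (fun x => x.g) mul_g
  obtain ⟨φ, hφ, hnear⟩ := homogenize (fun x : Ext G ω => x.a) C (by
    intro x y
    have e : (x * y).a - x.a - y.a = ω x.g y.g := by rw [mul_a]; ring
    show |(x * y).a - x.a - y.a| ≤ C
    rw [e]; exact hC _ _)
  have h1l : ∀ g, ω 1 g = ω 1 1 := by
    intro g
    have := hω 1 1 g
    simp only [one_mul] at this
    linarith
  have h1r : ∀ g, ω g 1 = ω 1 1 := by
    intro g
    have := hω g 1 1
    simp only [mul_one] at this
    linarith
  have hcen : ∀ x y : Ext G ω, x.g = 1 → Commute x y := by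
    intro x y hx
    apply Ext.ext'
    · rw [mul_a, mul_a, hx, h1l y.g, h1r y.g]; ring
    · rw [mul_g, mul_g, hx, one_mul, mul_one]
  have hom := main_hom (ρ := ρ.comp π) hφ (fun e => hρ _) (fun e => hout _) (by
    intro a ha b hb
    apply hφ.comm_add
    apply hcen
    rw [MonoidHom.mem_ker] at ha
    exact hinj (by rw [map_one]; exact ha))
  -- value on the centre
  have hz : ∀ r : ℝ, φ ⟨r - ω 1 1, 1⟩ = r := by
    intro r
    have hp : ∀ n : ℕ, (⟨r - ω 1 1, 1⟩ : Ext G ω) ^ n = ⟨n * r - ω 1 1, 1⟩ := by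
      intro n
      induction n with
      | zero => rw [pow_zero]; apply Ext.ext'
                · show - ω 1 1 = _
                  simp
                · rfl
      | succ n ih =>
        rw [pow_succ, ih]
        apply Ext.ext'
        · rw [mul_a]; push_cast; ring
        · rw [mul_g]; exact mul_one _
    have : φ ⟨r - ω 1 1, 1⟩ - r = 0 := by
      apply eq_zero_of_bdd (C := C + |ω 1 1|)
      intro n
      have h1 := hnear ((⟨r - ω 1 1, 1⟩ : Ext G ω) ^ n)
      rw [hφ.hpow, hp] at h1
      have h2 := abs_le.mp h1
      simp only at h2
      have := neg_abs_le (ω 1 1)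
      have := le_abs_self (ω 1 1)
      rw [abs_le]; constructor <;> linarith
    linarith
  refine ⟨fun g => φ ⟨0, g⟩, ⟨C, fun g => by simpa using hnear ⟨0, g⟩⟩, ?_⟩
  intro g h
  have e : (⟨0, g⟩ : Ext G ω) * ⟨0, h⟩ = ⟨ω g h - ω 1 1, 1⟩ * ⟨0, g * h⟩ := by
    apply Ext.ext'
    · rw [mul_a, mul_a]
      show 0 + 0 + ω g h = ω g h - ω 1 1 + 0 + ω 1 (g * h)
      rw [h1l (g * h)]; ring
    · rw [mul_g, mul_g]; exact (one_mul _).symm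
  have h2 := hom ⟨0, g⟩ ⟨0, h⟩
  rw [e, hom, hz] at h2
  show ω g h = φ ⟨0, h⟩ - φ ⟨0, g * h⟩ + φ ⟨0, g⟩
  linarith

end

end PLAcyc

/-- Every subgroup of `PL⁺([0,1])` is 2-boundedly acyclic. -/
theorem subgroup_of_PL_is_two_boundedly_acyclic (G : Subgroup (ℝ ≃o ℝ))
    (hG : ∀ f ∈ G, InPL01 f) :
    Is2BoundedlyAcyclic ↥G := by
  exact PLAcyc.acyclic_of G.subtype G.subtype_injective
    (fun e => PLAcyc.locAff_of_PL (hG e e.2)) (fun e => (hG e e.2).1)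
end

section
/- A quasi-periodic labelling is not periodic: if ρ is a quasi-periodic labelling, then there is no nonzero p ∈ ½ℤ such that ρ(x + p) = ρ(x) for all x ∈ ½ℤ. -/
/-! ### Letters, labellings and quasi-periodicity -/

/-- The four letters `a, b, a⁻¹, b⁻¹`. -/
inductive Letter : Type
  | a : Letter
  | b : Letter
  | A : Letter  -- `a⁻¹`
  | B : Letter  -- `b⁻¹`
  deriving DecidableEq

/-- The formal inverse of a letter. -/
def Letter.inv : Letter → Letter
  | .a => .A
  | .A => .a
  | .b => .B
  | .B => .b

/-- We encode the set of half-integers `½ℤ` by `ℤ` via `m ↦ m / 2`; integer points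
correspond to even indices and proper half-integer points to odd indices.
A labelling assigns `a^{±1}` to integer points and `b^{±1}` to half-integer points. -/
def IsLabelling (ρ : ℤ → Letter) : Prop :=
  ∀ m : ℤ, (Even m → ρ m = Letter.a ∨ ρ m = Letter.A) ∧
    (Odd m → ρ m = Letter.b ∨ ρ m = Letter.B)

/-- The word of the labelling `ρ` along the block `{k, k+1, …, k+n}` (in the
half-integer encoding, the block of size `n+1` starting at `k/2`). -/
def blockWord (ρ : ℤ → Letter) (k : ℤ) (n : ℕ) : List Letter :=
  (List.range (n + 1)).map fun i => ρ (k + i)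

/-- The formal inverse of a word: reverse the word and invert each letter. -/
def wordInv (w : List Letter) : List Letter :=
  (w.map Letter.inv).reverse

/-- A labelling is quasi-periodic if (1) every subword of the labelling appears as a
subword (string of consecutive letters) of every sufficiently large block, and (2) the
formal inverse of every subword of the labelling is again a subword of the labelling. -/
def IsQuasiPeriodic (ρ : ℤ → Letter) : Prop :=
  IsLabelling ρ ∧
    (∀ (k : ℤ) (n : ℕ), ∃ N : ℕ, ∀ (k' : ℤ) (n' : ℕ), N ≤ n' + 1 →
      (blockWord ρ k n) <:+: (blockWord ρ k' n')) ∧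
    (∀ (k : ℤ) (n : ℕ), ∃ k' : ℤ, blockWord ρ k' n = wordInv (blockWord ρ k n))

theorem periodic_zmul (ρ : ℤ → Letter) (p : ℤ) (hp : ∀ m : ℤ, ρ (m + p) = ρ m) (t m : ℤ) :
    ρ (m + t * p) = ρ m := by
  induction t using Int.induction_on generalizing m with
  | zero => simp
  | succ i ih =>
    have h : m + ((i : ℤ) + 1) * p = (m + i * p) + p := by ring
    rw [h, hp, ih]
  | pred i ih =>
    have h : m + (-(i : ℤ)) * p = (m + (-(i : ℤ) - 1) * p) + p := by ring
    rw [← hp, ← h, ih]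

theorem blockWord_eq (ρ : ℤ → Letter) (k : ℤ) (n : ℕ) :
    blockWord ρ k n = (List.range (n + 1)).map fun i : ℕ => ρ (k + (i : ℤ)) := by
  unfold blockWord
  induction List.range (n + 1) with
  | nil => rfl
  | cons x l ih => simpa using ih

theorem blockWord_inv_apply (ρ : ℤ → Letter) (k k' : ℤ) (n : ℕ)
    (h : blockWord ρ k' n = wordInv (blockWord ρ k n)) (j : ℕ) (hj : j ≤ n) :
    ρ (k' + n - j) = (ρ (k + j)).inv := by
  have h2 := congrArg (fun l => l[n - j]?) h
  have h3 : n - j < n + 1 := by omega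
  have h4 : n - (n - j) = j := by omega
  have h5 : k' + ((n - j : ℕ) : ℤ) = k' + n - j := by
    rw [Nat.cast_sub hj]; ring
  simpa [blockWord_eq, wordInv, h3, h4, h5] using h2

/-- A quasi-periodic labelling is not periodic: there is no nonzero
`p ∈ ½ℤ` (encoded as a nonzero integer in our encoding of `½ℤ` by `ℤ`) such that
`ρ(x + p) = ρ(x)` for all `x`. -/
theorem quasiPeriodic_not_periodic (ρ : ℤ → Letter) (hρ : IsQuasiPeriodic ρ) :
    ¬ ∃ p : ℤ, p ≠ 0 ∧ ∀ m : ℤ, ρ (m + p) = ρ m := by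
  rintro ⟨p, hp0, hp⟩
  obtain ⟨hl, -, hinv⟩ := hρ
  obtain ⟨k', hk⟩ := hinv 0 p.natAbs
  have key := blockWord_inv_apply ρ 0 k' p.natAbs hk
  generalize hc : k' + (p.natAbs : ℤ) = c at key
  have hev : Even c := by
    by_contra hodd
    rw [Int.not_even_iff_odd] at hodd
    have h0 := key 0 (Nat.zero_le _)
    simp at h0
    rcases (hl c).2 hodd with h | h <;> rcases (hl 0).1 (by simp) with h' | h' <;>
      simp [h, h', Letter.inv] at h0
  obtain ⟨d, hd⟩ := hev
  have hj0 : 0 ≤ d % p := Int.emod_nonneg d hp0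
  have hjlt : d % p < |p| := Int.emod_lt_abs d hp0
  have hcast : (((d % p).toNat : ℕ) : ℤ) = d % p := Int.toNat_of_nonneg hj0
  have h1 := key (d % p).toNat (by rw [Int.abs_eq_natAbs] at hjlt; omega)
  rw [hcast, zero_add] at h1
  have h2 : c - d % p = d % p + (2 * (d / p)) * p := by
    have := Int.emod_add_mul_ediv d p
    linarith
  rw [h2, periodic_zmul ρ p hp] at h1
  revert h1
  cases ρ (d % p) <;> simp [Letter.inv]
end
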